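/- arXiv:math/0107122 — 10 statements merged into one kernel-verified Lean document; each statement's English description precedes it below -/
import Mathlib

section
/- Fix an open set U ⊆ ℝ² with coordinates (R¹,R²) and smooth functions a, b : U → ℝ. Call a pair (G¹¹, G²²) of smooth positive functions on U admissible (for a,b) if it satisfies ∂₂G¹¹ = −2aG¹¹, ∂₁G²² = −2bG²², and the constant-curvature-one condition (∂₂a + a²)G²² + (a/2)∂₂G²² + (∂₁b + b²)G¹¹ + (b/2)∂₁G¹¹ + 1 = 0. Then if (G¹¹, G²²) and (G̃¹¹, G̃²²) are both admissible and λ ∈ ℝ is such that λG¹¹ + (1−λ)G̃¹¹ and λG²² + (1−λ)G̃²² are positive on U, the pair (λG¹¹ + (1−λ)G̃¹¹, λG²² + (1−λ)G̃²²) is also admissible. Consequently, S-deformations of a surface occur in families parametrized affinely. -/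
/-- First partial derivative `∂₁ = ∂/∂R¹` of a function on `ℝ²`. -/
noncomputable def pd1 (f : ℝ × ℝ → ℝ) (p : ℝ × ℝ) : ℝ := fderiv ℝ f p (1, 0)

/-- Second partial derivative `∂₂ = ∂/∂R²` of a function on `ℝ²`. -/
noncomputable def pd2 (f : ℝ × ℝ → ℝ) (p : ℝ × ℝ) : ℝ := fderiv ℝ f p (0, 1)

/-- A pair `(G11, G22)` of inverse metric coefficients is admissible for the
coefficients `a`, `b` on `U`: both are smooth and positive on `U`, satisfy
`∂₂G¹¹ = −2aG¹¹`, `∂₁G²² = −2bG²²`, and the constant-curvature-one condition. -/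
def Admissible (U : Set (ℝ × ℝ)) (a b G11 G22 : ℝ × ℝ → ℝ) : Prop :=
  ContDiffOn ℝ (⊤ : ℕ∞) G11 U ∧ ContDiffOn ℝ (⊤ : ℕ∞) G22 U ∧
  (∀ p ∈ U, 0 < G11 p) ∧ (∀ p ∈ U, 0 < G22 p) ∧
  (∀ p ∈ U, pd2 G11 p = -2 * a p * G11 p) ∧
  (∀ p ∈ U, pd1 G22 p = -2 * b p * G22 p) ∧
  (∀ p ∈ U,
    (pd2 a p + a p ^ 2) * G22 p + a p / 2 * pd2 G22 p +
      (pd1 b p + b p ^ 2) * G11 p + b p / 2 * pd1 G11 p + 1 = 0)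

/-- Affine combinations of admissible pairs (for fixed `a`, `b`) which remain
positive are again admissible: S-deformations occur in affine families. -/
theorem affine_combination_admissible
    (U : Set (ℝ × ℝ)) (hU : IsOpen U) (a b : ℝ × ℝ → ℝ)
    (ha : ContDiffOn ℝ (⊤ : ℕ∞) a U) (hb : ContDiffOn ℝ (⊤ : ℕ∞) b U)
    (G11 G22 G11' G22' : ℝ × ℝ → ℝ)
    (h1 : Admissible U a b G11 G22) (h2 : Admissible U a b G11' G22')
    (lam : ℝ)
    (hpos1 : ∀ p ∈ U, 0 < lam * G11 p + (1 - lam) * G11' p)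
    (hpos2 : ∀ p ∈ U, 0 < lam * G22 p + (1 - lam) * G22' p) :
    Admissible U a b (fun p => lam * G11 p + (1 - lam) * G11' p)
      (fun p => lam * G22 p + (1 - lam) * G22' p) := by
  obtain ⟨s1, s2, _, _, e1, e2, e3⟩ := h1
  obtain ⟨t1, t2, _, _, f1, f2, f3⟩ := h2
  have key : ∀ F F' : ℝ × ℝ → ℝ, ContDiffOn ℝ (⊤ : ℕ∞) F U → ContDiffOn ℝ (⊤ : ℕ∞) F' U →
      ∀ p ∈ U, fderiv ℝ (fun q => lam * F q + (1 - lam) * F' q) p =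
        lam • fderiv ℝ F p + (1 - lam) • fderiv ℝ F' p := by
    intro F F' hF hF' p hp
    have d : DifferentiableAt ℝ F p :=
      (hF.contDiffAt (hU.mem_nhds hp)).differentiableAt (by simp)
    have d' : DifferentiableAt ℝ F' p :=
      (hF'.contDiffAt (hU.mem_nhds hp)).differentiableAt (by simp)
    exact ((d.hasFDerivAt.const_mul lam).add (d'.hasFDerivAt.const_mul (1 - lam))).fderiv
  have k1 : ∀ F F' : ℝ × ℝ → ℝ, ContDiffOn ℝ (⊤ : ℕ∞) F U → ContDiffOn ℝ (⊤ : ℕ∞) F' U →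
      ∀ p ∈ U, pd1 (fun q => lam * F q + (1 - lam) * F' q) p =
        lam * pd1 F p + (1 - lam) * pd1 F' p := by
    intro F F' hF hF' p hp
    simp [pd1, key F F' hF hF' p hp]
  have k2 : ∀ F F' : ℝ × ℝ → ℝ, ContDiffOn ℝ (⊤ : ℕ∞) F U → ContDiffOn ℝ (⊤ : ℕ∞) F' U →
      ∀ p ∈ U, pd2 (fun q => lam * F q + (1 - lam) * F' q) p =
        lam * pd2 F p + (1 - lam) * pd2 F' p := by
    intro F F' hF hF' p hp
    simp [pd2, key F F' hF hF' p hp]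
  refine ⟨(contDiffOn_const.mul s1).add (contDiffOn_const.mul t1),
    (contDiffOn_const.mul s2).add (contDiffOn_const.mul t2), hpos1, hpos2, ?_, ?_, ?_⟩
  · intro p hp
    rw [k2 _ _ s1 t1 p hp, e1 p hp, f1 p hp]
    ring
  · intro p hp
    rw [k1 _ _ s2 t2 p hp, e2 p hp, f2 p hp]
    ring
  · intro p hp
    rw [k2 _ _ s2 t2 p hp, k1 _ _ s1 t1 p hp]
    linear_combination lam * e3 p hp + (1 - lam) * f3 p hp
end

section
/- Let c ∈ ℝ and let ψ be a smooth positive function of R². On the open set U ⊆ ℝ² where cos R¹ ≠ 0, sin R¹ ≠ 0 and 1 + c/cos²R¹ > 0, consider the Monge moulding metric with inverse coefficients G¹¹ = 1 + c/cos²(R¹) and G²² = ψ(R²)/sin²(R¹). Then: (i) the coefficients defined by ∂₂G¹¹ = −2aG¹¹ and ∂₁G²² = −2bG²² are a = 0 and b = cot(R¹), independent of c and ψ; and (ii) the constant-curvature-one condition (∂₂a + a²)G²² + (a/2)∂₂G²² + (∂₁b + b²)G¹¹ + (b/2)∂₁G¹¹ + 1 = 0 holds on U for every c and ψ. -/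
open Real

/-- For the Monge moulding metric with `G¹¹ = 1 + c/cos²R¹`, `G²² = ψ(R²)/sin²R¹`:
(i) the Christoffel coefficients are `a = 0`, `b = cot R¹`, independent of `c, ψ`;
(ii) the constant-curvature-one condition holds for all `c, ψ`. -/
theorem monge_moulding (c : ℝ) (ψ : ℝ → ℝ)
    (hψ : ContDiff ℝ (⊤ : ℕ∞) ψ) (hψpos : ∀ t, 0 < ψ t)
    (U : Set (ℝ × ℝ))
    (hUdef : U = {p : ℝ × ℝ |
      Real.cos p.1 ≠ 0 ∧ Real.sin p.1 ≠ 0 ∧ 0 < 1 + c / Real.cos p.1 ^ 2})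
    (G11 G22 A B : ℝ × ℝ → ℝ)
    (hG11 : ∀ p : ℝ × ℝ, G11 p = 1 + c / Real.cos p.1 ^ 2)
    (hG22 : ∀ p : ℝ × ℝ, G22 p = ψ p.2 / Real.sin p.1 ^ 2)
    (hA : ∀ p : ℝ × ℝ, A p = 0)
    (hB : ∀ p : ℝ × ℝ, B p = Real.cos p.1 / Real.sin p.1) :
    (∀ p ∈ U, pd2 G11 p = -2 * A p * G11 p ∧ pd1 G22 p = -2 * B p * G22 p) ∧
    (∀ p ∈ U,
      (pd2 A p + A p ^ 2) * G22 p + A p / 2 * pd2 G22 p +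
        (pd1 B p + B p ^ 2) * G11 p + B p / 2 * pd1 G11 p + 1 = 0) := by
  have hfst : ∀ p : ℝ × ℝ, HasFDerivAt (fun q : ℝ × ℝ => q.1) (ContinuousLinearMap.fst ℝ ℝ ℝ) p :=
    fun p => hasFDerivAt_fst
  have hsnd : ∀ p : ℝ × ℝ, HasFDerivAt (fun q : ℝ × ℝ => q.2) (ContinuousLinearMap.snd ℝ ℝ ℝ) p :=
    fun p => hasFDerivAt_snd
  obtain rfl : G11 = fun p => 1 + c / Real.cos p.1 ^ 2 := funext hG11
  obtain rfl : G22 = fun p => ψ p.2 / Real.sin p.1 ^ 2 := funext hG22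
  obtain rfl : A = fun _ => 0 := funext hA
  obtain rfl : B = fun p => Real.cos p.1 / Real.sin p.1 := funext hB
  subst hUdef
  have k1 : ∀ p : ℝ × ℝ, Real.cos p.1 ≠ 0 →
      HasFDerivAt (fun p : ℝ × ℝ => 1 + c / Real.cos p.1 ^ 2)
        ((2 * c * Real.sin p.1 / Real.cos p.1 ^ 3) • ContinuousLinearMap.fst ℝ ℝ ℝ) p := by
    intro p hc
    have h : HasDerivAt (fun x : ℝ => 1 + c / Real.cos x ^ 2)
        (2 * c * Real.sin p.1 / Real.cos p.1 ^ 3) p.1 := by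
      have := (((hasDerivAt_const p.1 c).fun_div ((Real.hasDerivAt_cos p.1).fun_pow 2)
        (pow_ne_zero 2 hc)).const_add 1)
      refine this.congr_deriv ?_
      field_simp
      ring
    exact h.comp_hasFDerivAt p (hfst p)
  have k2 : ∀ p : ℝ × ℝ, Real.sin p.1 ≠ 0 →
      HasFDerivAt (fun p : ℝ × ℝ => Real.cos p.1 / Real.sin p.1)
        ((-1 / Real.sin p.1 ^ 2) • ContinuousLinearMap.fst ℝ ℝ ℝ) p := by
    intro p hs
    have h : HasDerivAt (fun x : ℝ => Real.cos x / Real.sin x)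
        (-1 / Real.sin p.1 ^ 2) p.1 := by
      have := (Real.hasDerivAt_cos p.1).fun_div (Real.hasDerivAt_sin p.1) hs
      refine this.congr_deriv ?_
      congr 1
      linarith [Real.sin_sq_add_cos_sq p.1]
    exact h.comp_hasFDerivAt p (hfst p)
  have k3 : ∀ p : ℝ × ℝ, Real.sin p.1 ≠ 0 →
      HasFDerivAt (fun p : ℝ × ℝ => (Real.sin p.1 ^ 2)⁻¹)
        ((-2 * Real.cos p.1 / Real.sin p.1 ^ 3) • ContinuousLinearMap.fst ℝ ℝ ℝ) p := by
    intro p hs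
    have h : HasDerivAt (fun x : ℝ => (Real.sin x ^ 2)⁻¹)
        (-2 * Real.cos p.1 / Real.sin p.1 ^ 3) p.1 := by
      have := ((Real.hasDerivAt_sin p.1).fun_pow 2).fun_inv (pow_ne_zero 2 hs)
      refine this.congr_deriv ?_
      field_simp
      ring
    exact h.comp_hasFDerivAt p (hfst p)
  have k4 : ∀ p : ℝ × ℝ, HasFDerivAt (fun p : ℝ × ℝ => ψ p.2)
        ((deriv ψ p.2) • ContinuousLinearMap.snd ℝ ℝ ℝ) p := by
    intro p
    have h : HasDerivAt ψ (deriv ψ p.2) p.2 :=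
      ((hψ.differentiable (by simp)) p.2).hasDerivAt
    exact h.comp_hasFDerivAt p (hsnd p)
  refine ⟨?_, ?_⟩
  · rintro p ⟨hc, hs, -⟩
    refine ⟨?_, ?_⟩
    · simp [pd2, (k1 p hc).fderiv]
    · have := (k4 p).fun_mul (k3 p hs)
      simp only [pd1, div_eq_mul_inv (ψ _)]
      rw [this.fderiv]
      simp
      field_simp
  · rintro p ⟨hc, hs, -⟩
    simp only [pd1, pd2]
    rw [(k1 p hc).fderiv, (k2 p hs).fderiv]
    simp
    field_simp
    have := Real.sin_sq_add_cos_sq p.1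
    have e : Real.cos p.1 ^ 2 = 1 - Real.sin p.1 ^ 2 := by linarith
    simp only [e]
    ring
end

section
/- Let φ and ψ be smooth functions of R² with ψ > 0. On the open set U ⊆ ℝ² where sin(R¹ + φ(R²)) ≠ 0, consider the general moulding metric with inverse coefficients G¹¹ = 1 and G²² = ψ(R²)/sin²(R¹ + φ(R²)). Then: (i) the coefficients defined by ∂₂G¹¹ = −2aG¹¹ and ∂₁G²² = −2bG²² are a = 0 and b = cot(R¹ + φ(R²)), independent of ψ; and (ii) the constant-curvature-one condition (∂₂a + a²)G²² + (a/2)∂₂G²² + (∂₁b + b²)G¹¹ + (b/2)∂₁G¹¹ + 1 = 0 holds on U for every ψ. -/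
/-- For the general moulding metric with `G¹¹ = 1`,
`G²² = ψ(R²)/sin²(R¹ + φ(R²))`:
(i) the Christoffel coefficients are `a = 0`, `b = cot(R¹ + φ(R²))`,
independent of `ψ`;
(ii) the constant-curvature-one condition holds for every `ψ`. -/
theorem general_moulding (φ ψ : ℝ → ℝ)
    (hφ : ContDiff ℝ (⊤ : ℕ∞) φ) (hψ : ContDiff ℝ (⊤ : ℕ∞) ψ) (hψpos : ∀ t, 0 < ψ t)
    (U : Set (ℝ × ℝ))
    (hUdef : U = {p : ℝ × ℝ | Real.sin (p.1 + φ p.2) ≠ 0})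
    (G11 G22 A B : ℝ × ℝ → ℝ)
    (hG11 : ∀ p : ℝ × ℝ, G11 p = 1)
    (hG22 : ∀ p : ℝ × ℝ, G22 p = ψ p.2 / Real.sin (p.1 + φ p.2) ^ 2)
    (hA : ∀ p : ℝ × ℝ, A p = 0)
    (hB : ∀ p : ℝ × ℝ, B p = Real.cos (p.1 + φ p.2) / Real.sin (p.1 + φ p.2)) :
    (∀ p ∈ U, pd2 G11 p = -2 * A p * G11 p ∧ pd1 G22 p = -2 * B p * G22 p) ∧
    (∀ p ∈ U,
      (pd2 A p + A p ^ 2) * G22 p + A p / 2 * pd2 G22 p +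
        (pd1 B p + B p ^ 2) * G11 p + B p / 2 * pd1 G11 p + 1 = 0) := by
  have hdφ : Differentiable ℝ φ := hφ.differentiable (by simp)
  have hdψ : Differentiable ℝ ψ := hψ.differentiable (by simp)
  obtain rfl : G11 = fun _ => 1 := funext hG11
  obtain rfl : A = fun _ => 0 := funext hA
  obtain rfl := funext hG22
  obtain rfl := funext hB
  have key : ∀ (f : ℝ × ℝ → ℝ) (p : ℝ × ℝ) (d : ℝ), DifferentiableAt ℝ f p →
      HasDerivAt (fun t => f (t, p.2)) d p.1 → pd1 f p = d := by
    intro f p d hf hd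
    have h1 : HasDerivAt (fun t : ℝ => (t, p.2)) ((1 : ℝ), (0 : ℝ)) p.1 :=
      (hasDerivAt_id p.1).prodMk (hasDerivAt_const p.1 p.2)
    have h2 : HasFDerivAt f (fderiv ℝ f p) ((fun t : ℝ => (t, p.2)) p.1) := hf.hasFDerivAt
    exact (h2.comp_hasDerivAt p.1 h1).unique hd
  have hs : ∀ p : ℝ × ℝ, HasDerivAt (fun t => Real.sin (t + φ p.2)) (Real.cos (p.1 + φ p.2)) p.1 := by
    intro p
    simpa using ((hasDerivAt_id p.1).add_const (φ p.2)).sin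
  have hc : ∀ p : ℝ × ℝ, HasDerivAt (fun t => Real.cos (t + φ p.2)) (-Real.sin (p.1 + φ p.2)) p.1 := by
    intro p
    simpa using ((hasDerivAt_id p.1).add_const (φ p.2)).cos
  subst hUdef
  refine ⟨fun p hp => ⟨by simp [pd2], ?_⟩, fun p hp => ?_⟩
  · have hp' : Real.sin (p.1 + φ p.2) ≠ 0 := hp
    rw [key (fun q : ℝ × ℝ => ψ q.2 / Real.sin (q.1 + φ q.2) ^ 2) p _ ?_ ((hasDerivAt_const p.1 (ψ p.2)).div ((hs p).pow 2) (pow_ne_zero 2 hp'))]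
    · simp only [Pi.pow_apply]
      field_simp
      push_cast
      ring
    · have h1 : DifferentiableAt ℝ (fun q : ℝ × ℝ => ψ q.2) p := by fun_prop
      have h2 : DifferentiableAt ℝ (fun q : ℝ × ℝ => Real.sin (q.1 + φ q.2) ^ 2) p := by fun_prop
      simp only [div_eq_mul_inv]
      exact h1.mul (h2.fun_inv (pow_ne_zero 2 hp'))
  · have hp' : Real.sin (p.1 + φ p.2) ≠ 0 := hp
    rw [key (fun q : ℝ × ℝ => Real.cos (q.1 + φ q.2) / Real.sin (q.1 + φ q.2)) p _ ?_ ((hc p).div (hs p) hp')]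
    · simp only [pd1, pd2, fderiv_fun_const]
      simp
      field_simp
      ring
    · have h1 : DifferentiableAt ℝ (fun q : ℝ × ℝ => Real.cos (q.1 + φ q.2)) p := by fun_prop
      have h2 : DifferentiableAt ℝ (fun q : ℝ × ℝ => Real.sin (q.1 + φ q.2)) p := by fun_prop
      simp only [div_eq_mul_inv]
      exact h1.mul (h2.fun_inv hp')
end

section
/- Let a, b, c ∈ ℝ and set P(t) = t³ + at² + bt + c. On an open set U ⊆ ℝ² on which R² − R¹ > 0, P(R¹) > 0 and P(R²) < 0 (so that the metric below is positive definite), consider the spherical-conical metric with inverse coefficients G¹¹ = 4P(R¹)/(R² − R¹) and G²² = −4P(R²)/(R² − R¹). Then: (i) the coefficients defined by ∂₂G¹¹ = −2AG¹¹ and ∂₁G²² = −2BG²² are A = 1/(2(R² − R¹)) and B = 1/(2(R¹ − R²)), independent of a, b, c; and (ii) the constant-curvature-one condition (∂₂A + A²)G²² + (A/2)∂₂G²² + (∂₁B + B²)G¹¹ + (B/2)∂₁G¹¹ + 1 = 0 holds on U for all a, b, c. -/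
theorem pd1_of_slice {f : ℝ × ℝ → ℝ} {x y d : ℝ} (hf : DifferentiableAt ℝ f (x, y))
    (h : HasDerivAt (fun t => f (t, y)) d x) : pd1 f (x, y) = d := by
  have h1 : HasDerivAt (fun t : ℝ => (t, y)) ((1 : ℝ), (0 : ℝ)) x :=
    (hasDerivAt_id x).prodMk (hasDerivAt_const x y)
  exact (HasFDerivAt.comp_hasDerivAt x hf.hasFDerivAt h1).unique h

theorem pd2_of_slice {f : ℝ × ℝ → ℝ} {x y d : ℝ} (hf : DifferentiableAt ℝ f (x, y))
    (h : HasDerivAt (fun t => f (x, t)) d y) : pd2 f (x, y) = d := by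
  have h1 : HasDerivAt (fun t : ℝ => (x, t)) ((0 : ℝ), (1 : ℝ)) y :=
    (hasDerivAt_const y x).prodMk (hasDerivAt_id y)
  exact (HasFDerivAt.comp_hasDerivAt y hf.hasFDerivAt h1).unique h

/-- For the spherical-conical metric of quadrics, with
`G¹¹ = 4P(R¹)/(R² − R¹)`, `G²² = −4P(R²)/(R² − R¹)`, `P(t) = t³ + at² + bt + c`:
(i) the Christoffel coefficients are `A = 1/(2(R² − R¹))`, `B = 1/(2(R¹ − R²))`,
independent of `a, b, c`;
(ii) the constant-curvature-one condition holds for all `a, b, c`. -/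
theorem spherical_conical_quadrics (a b c : ℝ) (P : ℝ → ℝ)
    (hP : ∀ t, P t = t ^ 3 + a * t ^ 2 + b * t + c)
    (U : Set (ℝ × ℝ)) (hUopen : IsOpen U)
    (hU : ∀ p ∈ U, 0 < p.2 - p.1 ∧ 0 < P p.1 ∧ P p.2 < 0)
    (G11 G22 A B : ℝ × ℝ → ℝ)
    (hG11 : ∀ p : ℝ × ℝ, G11 p = 4 * P p.1 / (p.2 - p.1))
    (hG22 : ∀ p : ℝ × ℝ, G22 p = -(4 * P p.2 / (p.2 - p.1)))
    (hA : ∀ p : ℝ × ℝ, A p = 1 / (2 * (p.2 - p.1)))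
    (hB : ∀ p : ℝ × ℝ, B p = 1 / (2 * (p.1 - p.2))) :
    (∀ p ∈ U, pd2 G11 p = -2 * A p * G11 p ∧ pd1 G22 p = -2 * B p * G22 p) ∧
    (∀ p ∈ U,
      (pd2 A p + A p ^ 2) * G22 p + A p / 2 * pd2 G22 p +
        (pd1 B p + B p ^ 2) * G11 p + B p / 2 * pd1 G11 p + 1 = 0) := by
  obtain rfl : P = fun t => t ^ 3 + a * t ^ 2 + b * t + c := funext hP
  obtain rfl := funext hG11
  obtain rfl := funext hG22
  obtain rfl := funext hA
  obtain rfl := funext hB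
  clear hP hG11 hG22 hA hB
  have hPd : ∀ t : ℝ, HasDerivAt (fun t : ℝ => t ^ 3 + a * t ^ 2 + b * t + c)
      (3 * t ^ 2 + 2 * a * t + b) t := by
    intro t
    have h := ((((hasDerivAt_id t).pow 3).add (((hasDerivAt_id t).pow 2).const_mul a)).add
      ((hasDerivAt_id t).const_mul b)).add_const c
    refine h.congr_deriv ?_
    simp
    ring
  have hd1 : ∀ x y : ℝ, HasDerivAt (fun t : ℝ => y - t) (-1) x := fun x y =>
    (hasDerivAt_id x).const_sub y
  have hd2 : ∀ x y : ℝ, HasDerivAt (fun t : ℝ => t - x) 1 y := fun x y =>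
    (hasDerivAt_id y).sub_const x
  refine ⟨?_, ?_⟩
  · rintro ⟨x, y⟩ hp
    have hd : y - x ≠ 0 := (hU _ hp).1.ne'
    have hd' : x - y ≠ 0 := fun h => hd (by linarith)
    constructor
    · rw [pd2_of_slice (by fun_prop (disch := simpa using hd))
        ((hasDerivAt_const y (4 * (x ^ 3 + a * x ^ 2 + b * x + c))).div (hd2 x y) hd)]
      field_simp
      ring
    · rw [pd1_of_slice (by fun_prop (disch := simpa using hd))
        ((hasDerivAt_const x (4 * (y ^ 3 + a * y ^ 2 + b * y + c))).div (hd1 x y) hd).neg]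
      have : x - y = -(y - x) := by ring
      simp only [this]
      field_simp
      ring
  · rintro ⟨x, y⟩ hp
    have hd : y - x ≠ 0 := (hU _ hp).1.ne'
    have hd' : x - y ≠ 0 := fun h => hd (by linarith)
    have h2d : 2 * (y - x) ≠ 0 := mul_ne_zero two_ne_zero hd
    have h2d' : 2 * (x - y) ≠ 0 := mul_ne_zero two_ne_zero hd'
    rw [pd2_of_slice (by fun_prop (disch := simpa using hd))
        ((hasDerivAt_const y (1 : ℝ)).div ((hd2 x y).const_mul 2) h2d),
      pd2_of_slice (by fun_prop (disch := simpa using hd))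
        (((hPd y).const_mul 4).div (hd2 x y) hd).neg,
      pd1_of_slice (by fun_prop (disch := simpa using hd'))
        ((hasDerivAt_const x (1 : ℝ)).div ((hd2 y x).const_mul 2) h2d'),
      pd1_of_slice (by fun_prop (disch := simpa using hd))
        (((hPd x).const_mul 4).div (hd1 x y) hd)]
    have : x - y = -(y - x) := by ring
    simp only [this]
    field_simp
    ring
end

section
/- Let a, b, c ∈ ℝ and let p be a smooth positive function of R². On an open set U ⊆ ℝ² where R¹ ≠ R², p(R²) + p′(R²)(R¹ − R²) ≠ 0, a(R¹)² + bR¹ + c > 0 and a(R²)² + bR² + c + p(R²)² < 0, consider the metric with inverse coefficients G¹¹ = (R¹ − R²)²(a(R¹)² + bR¹ + c)/p(R²)² and G²² = −(R¹ − R²)²(a(R²)² + bR² + c + p(R²)²)/(p(R²) + p′(R²)(R¹ − R²))². Then: (i) the coefficients defined by ∂₂G¹¹ = −2AG¹¹ and ∂₁G²² = −2BG²² are A = 1/(R¹ − R²) + p′(R²)/p(R²) and B = 1/(R² − R¹) + p′(R²)/(p(R²) + p′(R²)(R¹ − R²)), independent of a, b, c; and (ii) the constant-curvature-one condition (∂₂A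 + A²)G²² + (A/2)∂₂G²² + (∂₁B + B²)G¹¹ + (B/2)∂₁G¹¹ + 1 = 0 holds on U for all a, b, c. -/
theorem pd1_eq {f : ℝ × ℝ → ℝ} {q : ℝ × ℝ} {d : ℝ} (hf : DifferentiableAt ℝ f q)
    (h : HasDerivAt (fun x => f (x, q.2)) d q.1) : pd1 f q = d := by
  have h1 : HasDerivAt (fun x : ℝ => (x, q.2)) ((1 : ℝ), (0 : ℝ)) q.1 :=
    (hasDerivAt_id q.1).prodMk (hasDerivAt_const q.1 q.2)
  have h2 : HasFDerivAt f (fderiv ℝ f q) ((fun x : ℝ => (x, q.2)) q.1) := hf.hasFDerivAt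
  exact (h2.comp_hasDerivAt q.1 h1).unique h

theorem pd2_eq {f : ℝ × ℝ → ℝ} {q : ℝ × ℝ} {d : ℝ} (hf : DifferentiableAt ℝ f q)
    (h : HasDerivAt (fun y => f (q.1, y)) d q.2) : pd2 f q = d := by
  have h1 : HasDerivAt (fun y : ℝ => (q.1, y)) ((0 : ℝ), (1 : ℝ)) q.2 :=
    (hasDerivAt_const q.2 q.1).prodMk (hasDerivAt_id q.2)
  have h2 : HasFDerivAt f (fderiv ℝ f q) ((fun y : ℝ => (q.1, y)) q.2) := hf.hasFDerivAt
  exact (h2.comp_hasDerivAt q.2 h1).unique h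

/-- For the metric of conformal transforms of surfaces of revolution, with
`G¹¹ = (R¹ − R²)²(a(R¹)² + bR¹ + c)/p(R²)²` and
`G²² = −(R¹ − R²)²(a(R²)² + bR² + c + p(R²)²)/(p(R²) + p′(R²)(R¹ − R²))²`:
(i) `A = 1/(R¹ − R²) + p′/p`, `B = 1/(R² − R¹) + p′/(p + p′(R¹ − R²))`,
independent of `a, b, c`;
(ii) the constant-curvature-one condition holds for all `a, b, c`. -/
theorem conformal_revolution (a b c : ℝ) (p : ℝ → ℝ)
    (hp : ContDiff ℝ (⊤ : ℕ∞) p) (hppos : ∀ t, 0 < p t)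
    (U : Set (ℝ × ℝ)) (hUopen : IsOpen U)
    (hU : ∀ q ∈ U, q.1 ≠ q.2 ∧ p q.2 + deriv p q.2 * (q.1 - q.2) ≠ 0 ∧
      0 < a * q.1 ^ 2 + b * q.1 + c ∧
      a * q.2 ^ 2 + b * q.2 + c + (p q.2) ^ 2 < 0)
    (G11 G22 A B : ℝ × ℝ → ℝ)
    (hG11 : ∀ q : ℝ × ℝ,
      G11 q = (q.1 - q.2) ^ 2 * (a * q.1 ^ 2 + b * q.1 + c) / (p q.2) ^ 2)
    (hG22 : ∀ q : ℝ × ℝ,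
      G22 q = -((q.1 - q.2) ^ 2 * (a * q.2 ^ 2 + b * q.2 + c + (p q.2) ^ 2) /
        (p q.2 + deriv p q.2 * (q.1 - q.2)) ^ 2))
    (hA : ∀ q : ℝ × ℝ, A q = 1 / (q.1 - q.2) + deriv p q.2 / p q.2)
    (hB : ∀ q : ℝ × ℝ,
      B q = 1 / (q.2 - q.1) + deriv p q.2 / (p q.2 + deriv p q.2 * (q.1 - q.2))) :
    (∀ q ∈ U, pd2 G11 q = -2 * A q * G11 q ∧ pd1 G22 q = -2 * B q * G22 q) ∧
    (∀ q ∈ U,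
      (pd2 A q + A q ^ 2) * G22 q + A q / 2 * pd2 G22 q +
        (pd1 B q + B q ^ 2) * G11 q + B q / 2 * pd1 G11 q + 1 = 0) := by
  obtain rfl : G11 = _ := funext hG11
  obtain rfl : G22 = _ := funext hG22
  obtain rfl : A = _ := funext hA
  obtain rfl : B = _ := funext hB
  have hpd : Differentiable ℝ p := hp.differentiable (by simp)
  have hp'd : Differentiable ℝ (deriv p) := by
    have h2 : ContDiff ℝ 2 p := hp.of_le (by simpa using (WithTop.coe_le_coe.2 (le_top : (2 : ℕ∞) ≤ ⊤)))
    exact ((contDiff_succ_iff_deriv (n := 1)).1 h2).2.2.differentiable (by simp)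
  clear hG11 hG22 hA hB
  rw [← forall₂_and]
  rintro ⟨x, y⟩ hq
  obtain ⟨hxy, hD, -, -⟩ := hU _ hq
  have hP := (hppos y).ne'
  simp only at hxy hD
  have hs : x - y ≠ 0 := sub_ne_zero.2 hxy
  have hs' : y - x ≠ 0 := sub_ne_zero.2 hxy.symm
  have dp : HasDerivAt p (deriv p y) y := (hpd y).hasDerivAt
  have dp' : HasDerivAt (deriv p) (deriv (deriv p) y) y := (hp'd y).hasDerivAt
  have ix := hasDerivAt_id' x
  have iy := hasDerivAt_id' y
  have dS1 : HasDerivAt (fun t => t - y) 1 x := ix.sub_const y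
  have dS2 : HasDerivAt (fun t => x - t) (-1) y := iy.const_sub x
  have dQ1 : HasDerivAt (fun t => a * t ^ 2 + b * t + c) (2 * a * x + b) x := by
    refine HasDerivAt.congr_deriv ((((ix.pow 2).const_mul a).add (ix.const_mul b)).add_const c) ?_
    norm_num; ring
  have dQ2 : HasDerivAt (fun t => a * t ^ 2 + b * t + c + p t ^ 2)
      (2 * a * y + b + 2 * p y * deriv p y) y := by
    refine HasDerivAt.congr_deriv (((((iy.pow 2).const_mul a).add (iy.const_mul b)).add_const c).add (dp.pow 2)) ?_
    norm_num; ring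
  have dD1 : HasDerivAt (fun t => p y + deriv p y * (t - y)) (deriv p y) x := by
    refine HasDerivAt.congr_deriv ((dS1.const_mul (deriv p y)).const_add (p y)) ?_
    ring
  have dD2 : HasDerivAt (fun t => p t + deriv p t * (x - t)) (deriv (deriv p) y * (x - y)) y := by
    refine HasDerivAt.congr_deriv (dp.add (dp'.mul dS2)) ?_
    ring
  have e1 := pd2_eq (q := (x, y)) (f := fun q : ℝ × ℝ =>
    (q.1 - q.2) ^ 2 * (a * q.1 ^ 2 + b * q.1 + c) / (p q.2) ^ 2)
    (by fun_prop (disch := positivity))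
    (((dS2.pow 2).mul_const (a * x ^ 2 + b * x + c)).div (dp.pow 2) (pow_ne_zero 2 hP))
  have e2 := pd1_eq (q := (x, y)) (f := fun q : ℝ × ℝ =>
    (q.1 - q.2) ^ 2 * (a * q.1 ^ 2 + b * q.1 + c) / (p q.2) ^ 2)
    (by fun_prop (disch := positivity))
    (((dS1.pow 2).mul dQ1).div_const (p y ^ 2))
  have e3 := pd1_eq (q := (x, y)) (f := fun q : ℝ × ℝ =>
    -((q.1 - q.2) ^ 2 * (a * q.2 ^ 2 + b * q.2 + c + (p q.2) ^ 2) /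
        (p q.2 + deriv p q.2 * (q.1 - q.2)) ^ 2))
    (by fun_prop (disch := positivity))
    (((dS1.pow 2).mul_const (a * y ^ 2 + b * y + c + p y ^ 2)).div (dD1.pow 2)
      (pow_ne_zero 2 hD)).neg
  have e4 := pd2_eq (q := (x, y)) (f := fun q : ℝ × ℝ =>
    -((q.1 - q.2) ^ 2 * (a * q.2 ^ 2 + b * q.2 + c + (p q.2) ^ 2) /
        (p q.2 + deriv p q.2 * (q.1 - q.2)) ^ 2))
    (by fun_prop (disch := positivity))
    (((dS2.pow 2).mul dQ2).div (dD2.pow 2) (pow_ne_zero 2 hD)).neg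
  have e5 := pd2_eq (q := (x, y)) (f := fun q : ℝ × ℝ =>
    1 / (q.1 - q.2) + deriv p q.2 / p q.2)
    (by fun_prop (disch := assumption))
    (((hasDerivAt_const y (1 : ℝ)).div dS2 hs).add (dp'.div dp hP))
  have e6 := pd1_eq (q := (x, y)) (f := fun q : ℝ × ℝ =>
    1 / (q.2 - q.1) + deriv p q.2 / (p q.2 + deriv p q.2 * (q.1 - q.2)))
    (by fun_prop (disch := assumption))
    (((hasDerivAt_const x (1 : ℝ)).div (ix.const_sub y) hs').add
      ((hasDerivAt_const x (deriv p y)).div dD1 hD))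
  rw [e1, e2, e3, e4, e5, e6]
  clear e1 e2 e3 e4 e5 e6 dD1 dD2 dQ1 dQ2 dS1 dS2 ix iy dp dp' hU
  simp only [Pi.pow_apply, Pi.mul_apply]
  generalize deriv (deriv p) y = r at *
  generalize deriv p y = P' at *
  generalize p y = P at *
  obtain ⟨s, rfl⟩ : ∃ s, x = y + s := ⟨x - y, by ring⟩
  have hss : y + s - y = s := by ring
  have hss' : y - (y + s) = -s := by ring
  rw [hss] at hs hD ⊢
  rw [hss']
  obtain ⟨D, hDD⟩ : ∃ D, D = P + P' * s := ⟨_, rfl⟩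
  rw [← hDD] at hD ⊢
  refine ⟨⟨?_, ?_⟩, ?_⟩
  · field_simp
    norm_num
    ring
  · field_simp
    norm_num
    ring
  · have hP : P = D - P' * s := by linarith
    field_simp
    norm_num
    subst hDD
    ring
end

section
/- On the open set U = {(R¹,R²) ∈ ℝ² : R¹ > 0, R² > 0, R¹ ≠ R², R¹ + R² ≠ 0}, the functions k¹ = (R¹ + R²)²(R¹)^{−5/2}(R²)^{−3/2} and k² = (R¹ + R²)²(R¹)^{−3/2}(R²)^{−5/2} satisfy the Codazzi system (∂₂k¹)/(k² − k¹) = 1/(2(R² − R¹)) − 1/(R¹ + R²) and (∂₁k²)/(k¹ − k²) = 1/(2(R¹ − R²)) − 1/(R¹ + R²). -/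
lemma aux_hasFDeriv (a b : ℝ) (p : ℝ × ℝ) (h1 : 0 < p.1) (h2 : 0 < p.2) (f : ℝ × ℝ → ℝ)
    (hf : ∀ p : ℝ × ℝ, f p = (p.1 + p.2) ^ 2 * p.1 ^ a * p.2 ^ b) (v : ℝ × ℝ) :
    fderiv ℝ f p v = 2 * (p.1 + p.2) * (v.1 + v.2) * p.1 ^ a * p.2 ^ b
      + (p.1 + p.2) ^ 2 * (a * p.1 ^ (a - 1) * v.1) * p.2 ^ b
      + (p.1 + p.2) ^ 2 * p.1 ^ a * (b * p.2 ^ (b - 1) * v.2) := by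
  have hfe : f = fun p : ℝ × ℝ => (p.1 + p.2) ^ 2 * p.1 ^ a * p.2 ^ b := funext hf
  have d1 : HasFDerivAt (fun p : ℝ × ℝ => p.1) (ContinuousLinearMap.fst ℝ ℝ ℝ) p := hasFDerivAt_fst
  have d2 : HasFDerivAt (fun p : ℝ × ℝ => p.2) (ContinuousLinearMap.snd ℝ ℝ ℝ) p := hasFDerivAt_snd
  have e1 := d1.rpow_const (p := a) (Or.inl h1.ne')
  have e2 := d2.rpow_const (p := b) (Or.inl h2.ne')
  have e := (((d1.add d2).pow 2).mul e1).mul e2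
  have hfe' : f = ((fun x : ℝ × ℝ => ((fun p : ℝ × ℝ => p.1) + fun p : ℝ × ℝ => p.2) x ^ 2) *
      fun x : ℝ × ℝ => x.1 ^ a) * fun x : ℝ × ℝ => x.2 ^ b := hfe
  rw [hfe', e.fderiv]
  simp
  ring

/-- The functions `k¹ = (R¹ + R²)²(R¹)^{−5/2}(R²)^{−3/2}`,
`k² = (R¹ + R²)²(R¹)^{−3/2}(R²)^{−5/2}` satisfy the Codazzi system
`(∂₂k¹)/(k² − k¹) = 1/(2(R² − R¹)) − 1/(R¹ + R²)`,
`(∂₁k²)/(k¹ − k²) = 1/(2(R¹ − R²)) − 1/(R¹ + R²)`. -/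
theorem finikov_gambier_codazzi
    (U : Set (ℝ × ℝ))
    (hUdef : U = {p : ℝ × ℝ | 0 < p.1 ∧ 0 < p.2 ∧ p.1 ≠ p.2 ∧ p.1 + p.2 ≠ 0})
    (k1 k2 : ℝ × ℝ → ℝ)
    (hk1 : ∀ p : ℝ × ℝ,
      k1 p = (p.1 + p.2) ^ 2 * p.1 ^ (-(5 : ℝ) / 2) * p.2 ^ (-(3 : ℝ) / 2))
    (hk2 : ∀ p : ℝ × ℝ,
      k2 p = (p.1 + p.2) ^ 2 * p.1 ^ (-(3 : ℝ) / 2) * p.2 ^ (-(5 : ℝ) / 2)) :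
    ∀ p ∈ U,
      pd2 k1 p / (k2 p - k1 p) = 1 / (2 * (p.2 - p.1)) - 1 / (p.1 + p.2) ∧
      pd1 k2 p / (k1 p - k2 p) = 1 / (2 * (p.1 - p.2)) - 1 / (p.1 + p.2) := by
  intro p hp
  rw [hUdef] at hp
  obtain ⟨h1, h2, hne, hs⟩ := hp
  have A : ∀ x : ℝ, 0 < x → x ^ (-(3 : ℝ) / 2) = x ^ (-(5 : ℝ) / 2) * x := by
    intro x hx
    rw [← Real.rpow_add_one hx.ne']
    norm_num
  have E : -(3 : ℝ) / 2 - 1 = -(5 : ℝ) / 2 := by norm_num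
  have hA : 0 < p.1 ^ (-(5 : ℝ) / 2) := Real.rpow_pos_of_pos h1 _
  have hB : 0 < p.2 ^ (-(5 : ℝ) / 2) := Real.rpow_pos_of_pos h2 _
  have hd : p.1 - p.2 ≠ 0 := sub_ne_zero.mpr hne
  have hd' : p.2 - p.1 ≠ 0 := sub_ne_zero.mpr hne.symm
  unfold pd1 pd2
  rw [aux_hasFDeriv _ _ p h1 h2 k1 hk1, aux_hasFDeriv _ _ p h1 h2 k2 hk2, hk1, hk2, E,
    A _ h1, A _ h2]
  generalize p.1 ^ (-(5 : ℝ) / 2) = a at *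
  generalize p.2 ^ (-(5 : ℝ) / 2) = b at *
  have k : (p.1 + p.2) ^ 2 * (a * p.1) * b - (p.1 + p.2) ^ 2 * a * (b * p.2)
      = (p.1 + p.2) ^ 2 * a * b * (p.1 - p.2) := by ring
  have k' : (p.1 + p.2) ^ 2 * a * (b * p.2) - (p.1 + p.2) ^ 2 * (a * p.1) * b
      = (p.1 + p.2) ^ 2 * a * b * (p.2 - p.1) := by ring
  have ha := hA.ne'
  have hb := hB.ne'
  rw [k, k']
  constructor
  · rw [div_sub_div _ _ (by positivity) hs, div_eq_div_iff (by positivity) (by positivity)]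
    ring
  · rw [div_sub_div _ _ (by positivity) hs, div_eq_div_iff (by positivity) (by positivity)]
    ring
end

section
/- Let c ∈ ℝ with |c| < 1. On ℝ², consider the metric with inverse coefficients G¹¹ = (1 + c)cosh²(R¹ + R²)/2 and G²² = (1 − c)cosh²(R¹ + R²)/2. Then: (i) the coefficients defined by ∂₂G¹¹ = −2AG¹¹ and ∂₁G²² = −2BG²² are A = B = −tanh(R¹ + R²), independent of c; (ii) the constant-curvature-one condition (∂₂A + A²)G²² + (A/2)∂₂G²² + (∂₁B + B²)G¹¹ + (B/2)∂₁G¹¹ + 1 = 0 holds on ℝ² for all such c; and (iii) the functions k¹ = cosh²(R¹ + R²), k² = −cosh²(R¹ + R²) satisfy (∂₂k¹)/(k² − k¹) = (∂₁k²)/(k¹ − k²) = −tanh(R¹ + R²). -/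
/-- Chain rule for functions of `R¹ + R²`. -/
theorem hasFDerivAt_sum_comp (f : ℝ × ℝ → ℝ) (g : ℝ → ℝ) (hf : ∀ p : ℝ × ℝ, f p = g (p.1 + p.2))
    (p : ℝ × ℝ) (g' : ℝ) (hg : HasDerivAt g g' (p.1 + p.2)) :
    pd1 f p = g' ∧ pd2 f p = g' := by
  have hs : HasFDerivAt (fun q : ℝ × ℝ => q.1 + q.2)
      (ContinuousLinearMap.fst ℝ ℝ ℝ + ContinuousLinearMap.snd ℝ ℝ ℝ) p :=
    hasFDerivAt_fst.add hasFDerivAt_snd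
  have hfe : f = g ∘ (fun q : ℝ × ℝ => q.1 + q.2) := funext hf
  have h := hg.comp_hasFDerivAt p hs
  rw [← hfe] at h
  simp [pd1, pd2, h.fderiv]

theorem hasDerivAt_const_cosh_sq (a x : ℝ) :
    HasDerivAt (fun x => a * Real.cosh x ^ 2) (2 * a * Real.cosh x * Real.sinh x) x := by
  have h := ((Real.hasDerivAt_cosh x).pow 2).const_mul a
  refine h.congr_deriv ?_
  norm_num
  ring

theorem hasDerivAt_neg_tanh (x : ℝ) :
    HasDerivAt (fun x => -Real.tanh x) (-(1 / Real.cosh x ^ 2)) x := by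
  have hne := (Real.cosh_pos x).ne'
  have h := ((Real.hasDerivAt_sinh x).div (Real.hasDerivAt_cosh x) hne).neg
  have e : (fun x => -Real.tanh x) = -(Real.sinh / Real.cosh) := by
    funext y
    simp [Real.tanh_eq_sinh_div_cosh]
  rw [e]
  refine h.congr_deriv ?_
  have h1 : Real.cosh x * Real.cosh x - Real.sinh x * Real.sinh x = 1 := by
    nlinarith [Real.cosh_sq_sub_sinh_sq x]
  rw [h1]

/-- For the metric with `G¹¹ = (1 + c)cosh²(R¹ + R²)/2`,
`G²² = (1 − c)cosh²(R¹ + R²)/2`, `|c| < 1`: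
(i) `A = B = −tanh(R¹ + R²)`, independent of `c`;
(ii) the constant-curvature-one condition holds on all of `ℝ²` for all such `c`;
(iii) `k¹ = cosh²(R¹ + R²)`, `k² = −cosh²(R¹ + R²)` satisfy the Codazzi system
with right-hand side `−tanh(R¹ + R²)`. -/
theorem one_parameter_family (c : ℝ) (hc : |c| < 1)
    (G11 G22 A B k1 k2 : ℝ × ℝ → ℝ)
    (hG11 : ∀ p : ℝ × ℝ, G11 p = (1 + c) * Real.cosh (p.1 + p.2) ^ 2 / 2)
    (hG22 : ∀ p : ℝ × ℝ, G22 p = (1 - c) * Real.cosh (p.1 + p.2) ^ 2 / 2)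
    (hA : ∀ p : ℝ × ℝ, A p = -Real.tanh (p.1 + p.2))
    (hB : ∀ p : ℝ × ℝ, B p = -Real.tanh (p.1 + p.2))
    (hk1 : ∀ p : ℝ × ℝ, k1 p = Real.cosh (p.1 + p.2) ^ 2)
    (hk2 : ∀ p : ℝ × ℝ, k2 p = -Real.cosh (p.1 + p.2) ^ 2) :
    (∀ p : ℝ × ℝ, pd2 G11 p = -2 * A p * G11 p ∧ pd1 G22 p = -2 * B p * G22 p) ∧
    (∀ p : ℝ × ℝ,
      (pd2 A p + A p ^ 2) * G22 p + A p / 2 * pd2 G22 p +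
        (pd1 B p + B p ^ 2) * G11 p + B p / 2 * pd1 G11 p + 1 = 0) ∧
    (∀ p : ℝ × ℝ,
      pd2 k1 p / (k2 p - k1 p) = -Real.tanh (p.1 + p.2) ∧
      pd1 k2 p / (k1 p - k2 p) = -Real.tanh (p.1 + p.2)) := by
  have d11 := fun p : ℝ × ℝ => hasFDerivAt_sum_comp G11 _
    (fun q => (hG11 q).trans (by ring)) p _ (hasDerivAt_const_cosh_sq ((1 + c) / 2) _)
  have d22 := fun p : ℝ × ℝ => hasFDerivAt_sum_comp G22 _
    (fun q => (hG22 q).trans (by ring)) p _ (hasDerivAt_const_cosh_sq ((1 - c) / 2) _)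
  have dk1 := fun p : ℝ × ℝ => hasFDerivAt_sum_comp k1 _
    (fun q => (hk1 q).trans (by ring)) p _ (hasDerivAt_const_cosh_sq 1 _)
  have dk2 := fun p : ℝ × ℝ => hasFDerivAt_sum_comp k2 _
    (fun q => (hk2 q).trans (by ring)) p _ (hasDerivAt_const_cosh_sq (-1) _)
  have dA := fun p : ℝ × ℝ => hasFDerivAt_sum_comp A _ hA p _ (hasDerivAt_neg_tanh _)
  have dB := fun p : ℝ × ℝ => hasFDerivAt_sum_comp B _ hB p _ (hasDerivAt_neg_tanh _)
  refine ⟨fun p => ?_, fun p => ?_, fun p => ?_⟩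
  · have hne := (Real.cosh_pos (p.1 + p.2)).ne'
    rw [(d11 p).2, (d22 p).1, hA, hB, hG11, hG22, Real.tanh_eq_sinh_div_cosh]
    constructor <;> field_simp
  · have hne := (Real.cosh_pos (p.1 + p.2)).ne'
    rw [(d11 p).1, (d22 p).2, (dA p).2, (dB p).1, hA, hB, hG11, hG22,
      Real.tanh_eq_sinh_div_cosh]
    field_simp
    ring
  · have hne := (Real.cosh_pos (p.1 + p.2)).ne'
    rw [(dk1 p).2, (dk2 p).1, hk1, hk2, Real.tanh_eq_sinh_div_cosh]
    have e1 : -Real.cosh (p.1 + p.2) ^ 2 - Real.cosh (p.1 + p.2) ^ 2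
      = -(2 * Real.cosh (p.1 + p.2) ^ 2) := by ring
    have e2 : Real.cosh (p.1 + p.2) ^ 2 - -Real.cosh (p.1 + p.2) ^ 2
      = 2 * Real.cosh (p.1 + p.2) ^ 2 := by ring
    rw [e1, e2]
    constructor <;> field_simp
end

section
/- Let H₁, H₂, β₁₂, β₂₁ be smooth functions on an open set U ⊆ ℝ², let η₁, η₂ be smooth functions of R¹, R² respectively, and suppose they satisfy system (4): ∂₁H₂ = β₁₂H₁, ∂₂H₁ = β₂₁H₂, ∂₁β₁₂ + ∂₂β₂₁ = 0, and η₁∂₁β₁₂ + η₂∂₂β₂₁ + (1/2)η₁′β₁₂ + (1/2)η₂′β₂₁ + H₁H₂ = 0. Fix λ ∈ ℝ with λ + η₁ > 0 and λ + η₂ > 0 on U, and define the 3×3 matrix-valued functions A₁ and A₂ by: A₁ has entries (A₁)₁₂ = −√((λ+η₂)/(λ+η₁)) β₂₁, (A₁)₂₁ = √((λ+η₂)/(λ+η₁)) β₂₁, (A₁)₁₃ = H₁/√(λ+η₁), (A₁)₃₁ = −H₁/√(λ+η₁), all other entries 0; A₂ has entries (A₂)₁₂ = √((λ+η₁)/(λ+η₂))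 β₁₂, (A₂)₂₁ = −√((λ+η₁)/(λ+η₂)) β₁₂, (A₂)₂₃ = H₂/√(λ+η₂), (A₂)₃₂ = −H₂/√(λ+η₂), all other entries 0. Then the zero-curvature condition ∂₂A₁ − ∂₁A₂ + A₁A₂ − A₂A₁ = 0 holds on U, i.e. the linear system ∂₁ψ = A₁ψ, ∂₂ψ = A₂ψ is compatible. -/
theorem pd1_of_diff {f : ℝ × ℝ → ℝ} {p : ℝ × ℝ} (hf : DifferentiableAt ℝ f p) :
    HasDerivAt (fun t => f (t, p.2)) (pd1 f p) p.1 := by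
  have h : HasDerivAt (fun t : ℝ => (t, p.2)) ((1 : ℝ), (0 : ℝ)) p.1 :=
    (hasDerivAt_id p.1).prodMk (hasDerivAt_const p.1 p.2)
  exact HasFDerivAt.comp_hasDerivAt p.1 (l := f) (f := fun t : ℝ => (t, p.2))
    hf.hasFDerivAt h

theorem pd2_of_diff {f : ℝ × ℝ → ℝ} {p : ℝ × ℝ} (hf : DifferentiableAt ℝ f p) :
    HasDerivAt (fun t => f (p.1, t)) (pd2 f p) p.2 := by
  have h : HasDerivAt (fun t : ℝ => (p.1, t)) ((0 : ℝ), (1 : ℝ)) p.2 :=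
    (hasDerivAt_const p.2 p.1).prodMk (hasDerivAt_id p.2)
  exact HasFDerivAt.comp_hasDerivAt p.2 (l := f) (f := fun t : ℝ => (p.1, t))
    hf.hasFDerivAt h

theorem diff_div_aux {c d : ℝ × ℝ → ℝ} {p : ℝ × ℝ} (hc : DifferentiableAt ℝ c p)
    (hd : DifferentiableAt ℝ d p) (h : d p ≠ 0) :
    DifferentiableAt ℝ (fun q => c q / d q) p := by
  simp only [div_eq_mul_inv]
  exact hc.fun_mul (hd.fun_inv h)

theorem pd1_neg (f : ℝ × ℝ → ℝ) (p : ℝ × ℝ) : pd1 (fun q => -f q) p = -pd1 f p := by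
  simp [pd1, fderiv_fun_neg]

theorem pd2_neg (f : ℝ × ℝ → ℝ) (p : ℝ × ℝ) : pd2 (fun q => -f q) p = -pd2 f p := by
  simp [pd2, fderiv_fun_neg]

theorem pd1_zero (p : ℝ × ℝ) : pd1 (fun _ => 0) p = 0 := by simp [pd1]

theorem pd2_zero (p : ℝ × ℝ) : pd2 (fun _ => 0) p = 0 := by simp [pd2]

/-- Given a solution of system (4) and a spectral parameter `λ` with
`λ + η₁ > 0`, `λ + η₂ > 0` on `U`, the `3×3` matrices `A₁`, `A₂` of the Lax
pair satisfy the zero-curvature condition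
`∂₂A₁ − ∂₁A₂ + A₁A₂ − A₂A₁ = 0`, i.e. the linear system
`∂₁ψ = A₁ψ`, `∂₂ψ = A₂ψ` is compatible. -/
theorem lax_pair_zero_curvature (U : Set (ℝ × ℝ)) (hUopen : IsOpen U)
    (H1 H2 β12 β21 : ℝ × ℝ → ℝ)
    (hH1 : ContDiffOn ℝ (⊤ : ℕ∞) H1 U) (hH2 : ContDiffOn ℝ (⊤ : ℕ∞) H2 U)
    (hβ12 : ContDiffOn ℝ (⊤ : ℕ∞) β12 U) (hβ21 : ContDiffOn ℝ (⊤ : ℕ∞) β21 U)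
    (η1 η2 : ℝ → ℝ) (hη1 : ContDiff ℝ (⊤ : ℕ∞) η1) (hη2 : ContDiff ℝ (⊤ : ℕ∞) η2)
    (h1 : ∀ p ∈ U, pd1 H2 p = β12 p * H1 p)
    (h2 : ∀ p ∈ U, pd2 H1 p = β21 p * H2 p)
    (h3 : ∀ p ∈ U, pd1 β12 p + pd2 β21 p = 0)
    (h4 : ∀ p ∈ U,
      η1 p.1 * pd1 β12 p + η2 p.2 * pd2 β21 p +
        (1 / 2) * deriv η1 p.1 * β12 p + (1 / 2) * deriv η2 p.2 * β21 p +
        H1 p * H2 p = 0)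
    (lam : ℝ)
    (hpos : ∀ p ∈ U, 0 < lam + η1 p.1 ∧ 0 < lam + η2 p.2)
    (A1 A2 : ℝ × ℝ → Matrix (Fin 3) (Fin 3) ℝ)
    (hA1 : ∀ p : ℝ × ℝ, A1 p =
      !![0, -(Real.sqrt ((lam + η2 p.2) / (lam + η1 p.1)) * β21 p),
           H1 p / Real.sqrt (lam + η1 p.1);
         Real.sqrt ((lam + η2 p.2) / (lam + η1 p.1)) * β21 p, 0, 0;
         -(H1 p / Real.sqrt (lam + η1 p.1)), 0, 0])
    (hA2 : ∀ p : ℝ × ℝ, A2 p =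
      !![0, Real.sqrt ((lam + η1 p.1) / (lam + η2 p.2)) * β12 p, 0;
         -(Real.sqrt ((lam + η1 p.1) / (lam + η2 p.2)) * β12 p), 0,
           H2 p / Real.sqrt (lam + η2 p.2);
         0, -(H2 p / Real.sqrt (lam + η2 p.2)), 0]) :
    ∀ p ∈ U, ∀ i j : Fin 3,
      pd2 (fun q => A1 q i j) p - pd1 (fun q => A2 q i j) p +
        (∑ k : Fin 3, A1 p i k * A2 p k j) -
        (∑ k : Fin 3, A2 p i k * A1 p k j) = 0 := by
  intro p hp
  obtain ⟨hx, hy⟩ := hpos p hp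
  have hU := hUopen.mem_nhds hp
  have dH1 : DifferentiableAt ℝ H1 p := (hH1.contDiffAt hU).differentiableAt (by simp)
  have dH2 : DifferentiableAt ℝ H2 p := (hH2.contDiffAt hU).differentiableAt (by simp)
  have dβ12 : DifferentiableAt ℝ β12 p := (hβ12.contDiffAt hU).differentiableAt (by simp)
  have dβ21 : DifferentiableAt ℝ β21 p := (hβ21.contDiffAt hU).differentiableAt (by simp)
  have dη1 : Differentiable ℝ η1 := hη1.differentiable (by simp)
  have dη2 : Differentiable ℝ η2 := hη2.differentiable (by simp)
  have e1 : DifferentiableAt ℝ (fun q : ℝ × ℝ => lam + η1 q.1) p := by fun_prop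
  have e2 : DifferentiableAt ℝ (fun q : ℝ × ℝ => lam + η2 q.2) p := by fun_prop
  have s1 := Real.sqrt_pos.2 hx
  have s2 := Real.sqrt_pos.2 hy
  have q1 := Real.sq_sqrt hx.le
  have q2 := Real.sq_sqrt hy.le
  have r21 : Real.sqrt ((lam + η2 p.2) / (lam + η1 p.1))
      = Real.sqrt (lam + η2 p.2) / Real.sqrt (lam + η1 p.1) := Real.sqrt_div hy.le _
  have r12 : Real.sqrt ((lam + η1 p.1) / (lam + η2 p.2))
      = Real.sqrt (lam + η1 p.1) / Real.sqrt (lam + η2 p.2) := Real.sqrt_div hx.le _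
  have d1 : DifferentiableAt ℝ (fun q : ℝ × ℝ => Real.sqrt (lam + η1 q.1)) p :=
    e1.sqrt hx.ne'
  have d2 : DifferentiableAt ℝ (fun q : ℝ × ℝ => Real.sqrt (lam + η2 q.2)) p :=
    e2.sqrt hy.ne'
  have d21 : DifferentiableAt ℝ
      (fun q : ℝ × ℝ => Real.sqrt ((lam + η2 q.2) / (lam + η1 q.1)) * β21 q) p :=
    DifferentiableAt.fun_mul (DifferentiableAt.sqrt
      (diff_div_aux (c := fun q : ℝ × ℝ => lam + η2 q.2)
        (d := fun q : ℝ × ℝ => lam + η1 q.1) e2 e1 hx.ne') (div_pos hy hx).ne') dβ21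
  have d12 : DifferentiableAt ℝ
      (fun q : ℝ × ℝ => Real.sqrt ((lam + η1 q.1) / (lam + η2 q.2)) * β12 q) p :=
    DifferentiableAt.fun_mul (DifferentiableAt.sqrt
      (diff_div_aux (c := fun q : ℝ × ℝ => lam + η1 q.1)
        (d := fun q : ℝ × ℝ => lam + η2 q.2) e1 e2 hy.ne') (div_pos hx hy).ne') dβ12
  have D1 : DifferentiableAt ℝ (fun q : ℝ × ℝ => H1 q / Real.sqrt (lam + η1 q.1)) p :=
    diff_div_aux (c := H1) (d := fun q : ℝ × ℝ => Real.sqrt (lam + η1 q.1))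
      dH1 d1 s1.ne'
  have D2 : DifferentiableAt ℝ (fun q : ℝ × ℝ => H2 q / Real.sqrt (lam + η2 q.2)) p :=
    diff_div_aux (c := H2) (d := fun q : ℝ × ℝ => Real.sqrt (lam + η2 q.2))
      dH2 d2 s2.ne'
  have P1 : pd2 (fun q => H1 q / Real.sqrt (lam + η1 q.1)) p
      = pd2 H1 p / Real.sqrt (lam + η1 p.1) :=
    (pd2_of_diff D1).unique
      ((pd2_of_diff dH1).div_const (Real.sqrt (lam + η1 p.1)))
  have P2 : pd1 (fun q => H2 q / Real.sqrt (lam + η2 q.2)) p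
      = pd1 H2 p / Real.sqrt (lam + η2 p.2) :=
    (pd1_of_diff D2).unique
      ((pd1_of_diff dH2).div_const (Real.sqrt (lam + η2 p.2)))
  have P3 := (pd2_of_diff d21).unique
      ((((((dη2 p.2).hasDerivAt.const_add lam).div_const (lam + η1 p.1)).sqrt
        (div_pos hy hx).ne').fun_mul (pd2_of_diff dβ21)))
  have P4 := (pd1_of_diff d12).unique
      ((((((dη1 p.1).hasDerivAt.const_add lam).div_const (lam + η2 p.2)).sqrt
        (div_pos hx hy).ne').fun_mul (pd1_of_diff dβ12)))
  simp only [Prod.mk.eta] at P3 P4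
  have g1 := h1 p hp
  have g2 := h2 p hp
  have g3 := h3 p hp
  have g4 := h4 p hp
  rw [g2] at P1
  rw [g1] at P2
  rw [r21] at P3
  rw [r12] at P4
  have K : pd2 (fun q => Real.sqrt ((lam + η2 q.2) / (lam + η1 q.1)) * β21 q) p
      + pd1 (fun q => Real.sqrt ((lam + η1 q.1) / (lam + η2 q.2)) * β12 q) p
      + H1 p / Real.sqrt (lam + η1 p.1) * (H2 p / Real.sqrt (lam + η2 p.2)) = 0 := by
    rw [P3, P4]
    generalize Real.sqrt (lam + η1 p.1) = x at *
    generalize Real.sqrt (lam + η2 p.2) = y at *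
    rw [← q1, ← q2]
    have k3 : pd2 β21 p = - pd1 β12 p := by linarith
    rw [k3] at g4 ⊢
    field_simp
    linear_combination 2 * g4 + 2 * pd1 β12 p * (q1 - q2)
  have K13 : β21 p * H2 p / Real.sqrt (lam + η1 p.1) = Real.sqrt (lam + η2 p.2) /
      Real.sqrt (lam + η1 p.1) * β21 p * (H2 p / Real.sqrt (lam + η2 p.2)) := by
    field_simp
  have K23 : β12 p * H1 p / Real.sqrt (lam + η2 p.2) = Real.sqrt (lam + η1 p.1) /
      Real.sqrt (lam + η2 p.2) * β12 p * (H1 p / Real.sqrt (lam + η1 p.1)) := by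
    field_simp
  clear P3 P4
  intro i j
  fin_cases i <;> fin_cases j <;>
    simp [hA1, hA2, Fin.sum_univ_three, pd1_neg, pd2_neg, pd1_zero, pd2_zero, P1, P2,
      -Real.sqrt_div', -Real.sqrt_div] <;>
    (try simp only [r12, r21]) <;> linarith
end

section
/- Let n ≥ 2, let c₁,…,cₙ be pairwise distinct real constants, let U ⊆ ℝⁿ be open, and let β_{ij} : U → ℝ (i ≠ j) be smooth functions satisfying system (S1): ∂_k β_{ij} = β_{ik}β_{kj} for all pairwise distinct i, j, k, and ∂ᵢβ_{ij} = Σ_{k≠i,j} ((c_k − c_j)/(c_j − cᵢ)) β_{ki}β_{kj} for all i ≠ j. Define Pᵢ = Σ_{k≠i} (c_k − cᵢ) β_{ki}² . Then ∂ⱼPᵢ = 0 on U for all j ≠ i; i.e. each Pᵢ is a function of the variable Rⁱ alone. -/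
/-- Partial derivative `∂ᵢ = ∂/∂Rⁱ` of a real function on `ℝⁿ`. -/
noncomputable def pdn {n : ℕ} (i : Fin n) (f : (Fin n → ℝ) → ℝ)
    (x : Fin n → ℝ) : ℝ :=
  fderiv ℝ f x (Pi.single i 1)

/-- For a solution `β_{ij}` of system (S1) with pairwise distinct constants
`cᵢ`, the quantities `Pᵢ = Σ_{k≠i}(c_k − cᵢ)β_{ki}²` are first integrals:
`∂ⱼPᵢ = 0` for all `j ≠ i`, i.e. `Pᵢ` depends on `Rⁱ` alone. -/
theorem system_S1_first_integrals (n : ℕ) (hn : 2 ≤ n)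
    (c : Fin n → ℝ) (hc : ∀ i j : Fin n, i ≠ j → c i ≠ c j)
    (U : Set (Fin n → ℝ)) (hUopen : IsOpen U)
    (β : Fin n → Fin n → (Fin n → ℝ) → ℝ)
    (hβ : ∀ i j, i ≠ j → ContDiffOn ℝ (⊤ : ℕ∞) (β i j) U)
    (hS1a : ∀ i j k : Fin n, i ≠ j → j ≠ k → i ≠ k → ∀ x ∈ U,
      pdn k (β i j) x = β i k x * β k j x)
    (hS1b : ∀ i j : Fin n, i ≠ j → ∀ x ∈ U,
      pdn i (β i j) x =
        ∑ k ∈ (Finset.univ.erase i).erase j,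
          ((c k - c j) / (c j - c i)) * β k i x * β k j x) :
    ∀ i j : Fin n, j ≠ i → ∀ x ∈ U,
      pdn j (fun y => ∑ k ∈ Finset.univ.erase i, (c k - c i) * β k i y ^ 2) x
        = 0 := by
  intro i j hji x hx
  have hd : ∀ k, k ≠ i → DifferentiableAt ℝ (β k i) x := fun k hk =>
    ((hβ k i hk).contDiffAt (hUopen.mem_nhds hx)).differentiableAt (by simp)
  have hder : HasFDerivAt
      (fun y => ∑ k ∈ Finset.univ.erase i, (c k - c i) * β k i y ^ 2)
      (∑ k ∈ Finset.univ.erase i,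
        (c k - c i) • ((2 * β k i x) • fderiv ℝ (β k i) x)) x := by
    apply HasFDerivAt.fun_sum
    intro k hk
    have h := (((hd k (Finset.ne_of_mem_erase hk)).hasFDerivAt).pow 2).const_mul (c k - c i)
    have e : (2 • β k i x ^ (2 - 1) : ℝ) = 2 * β k i x := by simp
    rw [e] at h
    exact h
  have hcc : c i - c j ≠ 0 := sub_ne_zero.mpr (hc i j hji.symm)
  have hsum : pdn j (fun y => ∑ k ∈ Finset.univ.erase i, (c k - c i) * β k i y ^ 2) x
      = ∑ k ∈ Finset.univ.erase i, (c k - c i) * (2 * β k i x * pdn j (β k i) x) := by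
    unfold pdn
    rw [hder.fderiv]
    simp
  rw [hsum, ← Finset.add_sum_erase _ _ (Finset.mem_erase.mpr ⟨hji, Finset.mem_univ j⟩),
    hS1b j i hji x hx, Finset.erase_right_comm, Finset.mul_sum, Finset.mul_sum,
    ← Finset.sum_add_distrib]
  apply Finset.sum_eq_zero
  intro k hk
  simp only [Finset.mem_erase, Finset.mem_univ, and_true] at hk
  rw [hS1a k i j (by tauto) hji.symm (by tauto) x hx]
  field_simp
  ring
end

section
/- Let p, q, r be smooth functions on an open set U ⊆ ℝ³ with coordinates (R¹,R²,R³) satisfying system (S2): ∂₁q = cos p, ∂₁r = −sin p, ∂₂p = −cosh q, ∂₂r = sinh q, ∂₃p = cos r, ∂₃q = sin r. Then at every point of U where sin p ≥ 0 and cos r ≥ 0, the function q satisfies the triple of Monge–Ampère equations: ∂₁∂₂q = cosh q · √(1 − (∂₁q)²), ∂₁∂₃q = −√(1 − (∂₁q)²) · √(1 − (∂₃q)²), and ∂₂∂₃q = sinh q · √(1 − (∂₃q)²). -/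
theorem pdn_comm_aux {n : ℕ} (i j : Fin n) (f : (Fin n → ℝ) → ℝ) (x : Fin n → ℝ)
    (hf : ContDiffAt ℝ 2 f x) :
    pdn i (fun y => pdn j f y) x = pdn j (fun y => pdn i f y) x := by
  have hd : DifferentiableAt ℝ (fderiv ℝ f) x :=
    (hf.fderiv_right (m := 1) (by norm_num)).differentiableAt (by norm_num)
  have key : ∀ v w : Fin n → ℝ,
      fderiv ℝ (fun y => fderiv ℝ f y v) x w = fderiv ℝ (fderiv ℝ f) x w v := by
    intro v w
    rw [fderiv_clm_apply hd (differentiableAt_const v)]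
    simp
  have hs : IsSymmSndFDerivAt ℝ f x := hf.isSymmSndFDerivAt (by simp)
  unfold pdn
  rw [key, key]
  exact hs _ _

theorem pdn_congr_aux {n : ℕ} (i : Fin n) (f g : (Fin n → ℝ) → ℝ) (U : Set (Fin n → ℝ))
    (hU : IsOpen U) (h : ∀ y ∈ U, f y = g y) (x : Fin n → ℝ) (hx : x ∈ U) :
    pdn i f x = pdn i g x := by
  have : f =ᶠ[nhds x] g := by
    filter_upwards [hU.mem_nhds hx] with y hy using h y hy
  unfold pdn
  rw [this.fderiv_eq]

/-- A solution `p, q, r` of system (S2): `∂₁q = cos p`, `∂₁r = −sin p`,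
`∂₂p = −cosh q`, `∂₂r = sinh q`, `∂₃p = cos r`, `∂₃q = sin r`, yields (where
`sin p ≥ 0` and `cos r ≥ 0`) the triple of Monge–Ampère equations for `q`:
`∂₁∂₂q = cosh q √(1 − (∂₁q)²)`, `∂₁∂₃q = −√(1 − (∂₁q)²)√(1 − (∂₃q)²)`,
`∂₂∂₃q = sinh q √(1 − (∂₃q)²)`. -/
theorem system_S2_monge_ampere (U : Set (Fin 3 → ℝ)) (hUopen : IsOpen U)
    (p q r : (Fin 3 → ℝ) → ℝ)
    (hp : ContDiffOn ℝ (⊤ : ℕ∞) p U) (hq : ContDiffOn ℝ (⊤ : ℕ∞) q U)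
    (hr : ContDiffOn ℝ (⊤ : ℕ∞) r U)
    (h1 : ∀ x ∈ U, pdn 0 q x = Real.cos (p x))
    (h2 : ∀ x ∈ U, pdn 0 r x = -Real.sin (p x))
    (h3 : ∀ x ∈ U, pdn 1 p x = -Real.cosh (q x))
    (h4 : ∀ x ∈ U, pdn 1 r x = Real.sinh (q x))
    (h5 : ∀ x ∈ U, pdn 2 p x = Real.cos (r x))
    (h6 : ∀ x ∈ U, pdn 2 q x = Real.sin (r x)) :
    ∀ x ∈ U, 0 ≤ Real.sin (p x) → 0 ≤ Real.cos (r x) →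
      pdn 0 (fun y => pdn 1 q y) x
        = Real.cosh (q x) * Real.sqrt (1 - pdn 0 q x ^ 2) ∧
      pdn 0 (fun y => pdn 2 q y) x
        = -(Real.sqrt (1 - pdn 0 q x ^ 2) * Real.sqrt (1 - pdn 2 q x ^ 2)) ∧
      pdn 1 (fun y => pdn 2 q y) x
        = Real.sinh (q x) * Real.sqrt (1 - pdn 2 q x ^ 2) := by
  intro x hx hs hc
  have hU := hUopen.mem_nhds hx
  have dp : DifferentiableAt ℝ p x := (hp.contDiffAt hU).differentiableAt (by simp)
  have dr : DifferentiableAt ℝ r x := (hr.contDiffAt hU).differentiableAt (by simp)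
  have e1 : Real.sqrt (1 - pdn 0 q x ^ 2) = Real.sin (p x) := by
    rw [h1 x hx, ← Real.sin_sq, Real.sqrt_sq hs]
  have e2 : Real.sqrt (1 - pdn 2 q x ^ 2) = Real.cos (r x) := by
    rw [h6 x hx, ← Real.cos_sq', Real.sqrt_sq hc]
  have k1 : ∀ i, pdn i (fun y => Real.cos (p y)) x = -Real.sin (p x) * pdn i p x := by
    intro i
    unfold pdn
    rw [fderiv_cos dp]
    simp
  have k2 : ∀ i, pdn i (fun y => Real.sin (r y)) x = Real.cos (r x) * pdn i r x := by
    intro i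
    unfold pdn
    rw [fderiv_sin dr]
    simp
  rw [e1, e2]
  refine ⟨?_, ?_, ?_⟩
  · rw [pdn_comm_aux 0 1 q x ((hq.contDiffAt hU).of_le (WithTop.coe_le_coe.mpr (le_top : (2 : ℕ∞) ≤ ⊤))),
      pdn_congr_aux 1 _ _ U hUopen h1 x hx, k1, h3 x hx]
    ring
  · rw [pdn_congr_aux 0 _ _ U hUopen h6 x hx, k2, h2 x hx]
    ring
  · rw [pdn_congr_aux 1 _ _ U hUopen h6 x hx, k2, h4 x hx]
    ring
end
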